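/- arXiv:1111.5302 — 3 statements merged into one kernel-verified Lean document; each statement's English description precedes it below -/
import Mathlib

section
/- Let θ ∈ ℝ^N and suppose Σ_{i=1}^N Σ_{j=1}^N cos(θ_i − θ_j) ≠ 0. Then, summing over all spanning trees T of the complete graph on the vertex set {1,...,N}, one has Σ_T Π_{{l,m} edge of T} cos(θ_l − θ_m) = ( 2 Π_{i=1}^N κ_i(θ) − Σ_{k=1}^N Π_{i ≠ k} κ_i(θ) ) / ( Σ_{i,j} cos(θ_i − θ_j) ), where κ_i(θ) = Σ_{j=1}^N cos(θ_j − θ_i). -/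
open Real Matrix Finset

/-- `κ_i(θ) = Σ_j cos (θ_j - θ_i)`. -/
noncomputable def kappa (N : ℕ) (θ : Fin N → ℝ) (i : Fin N) : ℝ :=
  ∑ j, Real.cos (θ j - θ i)

/-- The symmetric edge weight `{l, m} ↦ cos (θ_l - θ_m)`. -/
noncomputable def edgeWeight (N : ℕ) (θ : Fin N → ℝ) : Sym2 (Fin N) → ℝ :=
  Sym2.lift ⟨fun l m => Real.cos (θ l - θ m), fun l m => by
    simp only []; rw [← neg_sub (θ l) (θ m), Real.cos_neg]⟩

section MatrixTree

variable {V R : Type*} [Fintype V] [DecidableEq V] [CommRing R]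

/-- Determinant of a rank-one perturbation, valid also for singular matrices. -/
theorem Matrix.det_add_vecMulVec_eq_sum_updateRow (A : Matrix V V R) (u v : V → R) :
    (A + vecMulVec u v).det = A.det + ∑ i, u i * (A.updateRow i v).det := by
  have key : ∀ s : Finset V,
      (Matrix.of fun i => if i ∈ s then A i + u i • v else A i).det =
        A.det + ∑ i ∈ s, u i * (A.updateRow i v).det := by
    intro s
    induction s using Finset.induction_on with
    | empty => simp; rfl
    | insert k s hk ih =>
      set M : Matrix V V R := Matrix.of fun i => if i ∈ s then A i + u i • v else A i with hM
      have h1 : (Matrix.of fun i => if i ∈ insert k s then A i + u i • v else A i) =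
          M.updateRow k (A k + u k • v) := by
        ext i j
        by_cases h : i = k
        · subst h; simp
        · simp [hM, h]
      have h2 : M.updateRow k (A k) = M := by
        ext i j
        by_cases h : i = k
        · subst h; simp [hM, hk]
        · simp [h]
      have h3 : (M.updateRow k v).det = (A.updateRow k v).det := by
        refine det_eq_of_forall_row_eq_smul_add_const (fun i => if i ∈ s then u i else 0) k
          (by simp [hk]) fun i j => ?_
        by_cases h : i = k
        · subst h; simp [hk]
        · by_cases hi : i ∈ s <;> simp [hM, h, hi]
      rw [h1, det_updateRow_add, det_updateRow_smul, h2, h3, ih, Finset.sum_insert hk]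
      ring
  have := key univ
  rw [← this]
  congr 1
  ext i j
  simp [vecMulVec_apply]

theorem Matrix.det_updateRow_diagonal (d v : V → R) (i : V) :
    ((diagonal d).updateRow i v).det = v i * ∏ j ∈ univ \ {i}, d j := by
  rw [← cramer_transpose_apply, cramer_eq_adjugate_mulVec, diagonal_transpose,
    adjugate_diagonal, mulVec_diagonal, mul_comm, Finset.sdiff_singleton_eq_erase]

/-- The Laplacian matrix of the complete graph with edge weights `w`. -/
def weightedLaplacian (w : Sym2 V → R) : Matrix V V R :=
  diagonal (fun i => ∑ j, w s(i, j)) - Matrix.of fun i j => w s(i, j)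

/-- `f` is the parent function of a tree on `V` rooted at `r`. -/
def IsParentFunction (r : V) (f : V → V) : Prop :=
  f r = r ∧ ∀ i, ∃ k, f^[k] i = r

omit [Fintype V] [DecidableEq V] in
theorem IsParentFunction.no_two_cycle {r : V} {f : V → V} (hf : IsParentFunction r f) {i : V}
    (hi : i ≠ r) : f (f i) ≠ i := by
  intro h
  have key : ∀ k, f^[k] i ≠ r ∧ f (f (f^[k] i)) = f^[k] i := by
    intro k
    induction k with
    | zero => exact ⟨hi, h⟩
    | succ k ih =>
      rw [Function.iterate_succ_apply']
      refine ⟨fun h' => ?_, by rw [ih.2]⟩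
      have := ih.2
      rw [h', hf.1] at this
      exact ih.1 this.symm
  obtain ⟨k, hk⟩ := hf.2 i
  exact (key k).1 hk

omit [Fintype V] [DecidableEq V] in
theorem IsParentFunction.apply_ne {r : V} {f : V → V} (hf : IsParentFunction r f) {i : V}
    (hi : i ≠ r) : f i ≠ i := fun h => hf.no_two_cycle hi (by rw [h, h])

/-- The graph joining every vertex to its parent. -/
def parentGraph (f : V → V) : SimpleGraph V :=
  SimpleGraph.fromRel fun i j => f i = j

open scoped Classical in
theorem IsParentFunction.edgeFinset_parentGraph {r : V} {f : V → V}
    (hf : IsParentFunction r f) :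
    (parentGraph f).edgeFinset = (univ \ {r}).image fun i => s(i, f i) := by
  ext e
  induction e with | _ a b
  rw [SimpleGraph.mem_edgeFinset, SimpleGraph.mem_edgeSet]
  simp only [parentGraph, SimpleGraph.fromRel_adj, mem_image, mem_sdiff,
    mem_univ, true_and, mem_singleton, Sym2.eq_iff]
  constructor
  · rintro ⟨hne, h | h⟩
    · exact ⟨a, by rintro rfl; exact hne (hf.1.symm.trans h), .inl ⟨rfl, h⟩⟩
    · exact ⟨b, by rintro rfl; exact hne (h.symm.trans hf.1), .inr ⟨rfl, h⟩⟩
  · rintro ⟨i, hi, ⟨rfl, rfl⟩ | ⟨rfl, rfl⟩⟩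
    · exact ⟨(hf.apply_ne hi).symm, .inl rfl⟩
    · exact ⟨hf.apply_ne hi, .inr rfl⟩

theorem IsParentFunction.injOn_edge {r : V} {f : V → V} (hf : IsParentFunction r f) :
    Set.InjOn (fun i => s(i, f i)) ((univ \ {r} : Finset V) : Set V) := by
  intro i hi j _ h
  have hi : i ≠ r := by simpa using hi
  rcases Sym2.eq_iff.1 h with h | h
  · exact h.1
  · exact absurd (by rw [h.2, ← h.1]) (hf.no_two_cycle hi)

omit [Fintype V] [DecidableEq V] in
theorem IsParentFunction.connected {r : V} {f : V → V} (hf : IsParentFunction r f) :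
    (parentGraph f).Connected := by
  have key : ∀ k i, f^[k] i = r → (parentGraph f).Reachable i r := by
    intro k
    induction k with
    | zero => rintro i rfl; rfl
    | succ k ih =>
      intro i h
      by_cases hi : i = f i
      · rw [hi]; exact ih _ h
      · exact (SimpleGraph.Adj.reachable (by simp [parentGraph, hi])).trans (ih _ h)
  rw [SimpleGraph.connected_iff_exists_forall_reachable]
  exact ⟨r, fun i => let ⟨k, hk⟩ := hf.2 i; (key k i hk).symm⟩

theorem IsParentFunction.isTree {r : V} {f : V → V} (hf : IsParentFunction r f) :
    (parentGraph f).IsTree := by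
  classical
  rw [SimpleGraph.isTree_iff_connected_and_card]
  refine ⟨hf.connected, ?_⟩
  rw [Nat.card_eq_fintype_card, ← SimpleGraph.edgeFinset_card, hf.edgeFinset_parentGraph,
    card_image_of_injOn (by convert hf.injOn_edge), card_sdiff]
  have : 0 < Fintype.card V := Fintype.card_pos_iff.2 ⟨r⟩
  simp
  omega

omit [Fintype V] [DecidableEq V] in
theorem IsParentFunction.eq_of_parentGraph_eq {r : V} {f g : V → V} (hf : IsParentFunction r f)
    (hg : IsParentFunction r g) (h : parentGraph f = parentGraph g) : f = g := by
  have key : ∀ k i, g^[k] i = r → f i = g i := by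
    intro k
    induction k with
    | zero => rintro i rfl; exact hf.1.trans hg.1.symm
    | succ k ih =>
      intro i hi
      by_cases hr : i = r
      · rw [hr, hf.1, hg.1]
      have hadj : (parentGraph f).Adj i (g i) := by
        rw [h]; simp [parentGraph, (hg.apply_ne hr).symm]
      rcases hadj.2 with h' | h'
      · exact h'
      · exact absurd ((ih (g i) hi).symm.trans h') (hg.no_two_cycle hr)
  funext i
  obtain ⟨k, hk⟩ := hg.2 i
  exact key k i hk

theorem SimpleGraph.IsTree.exists_parentFunction {T : SimpleGraph V} (hT : T.IsTree) (r : V) :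
    ∃ f, IsParentFunction r f ∧ parentGraph f = T := by
  classical
  have hstep : ∀ i, ∃ j, (i = r → j = r) ∧ (i ≠ r → T.Adj i j ∧ T.dist j r < T.dist i r) := by
    intro i
    by_cases hi : i = r
    · exact ⟨r, by simp [hi]⟩
    obtain ⟨p, hp⟩ := hT.connected.exists_walk_length_eq_dist i r
    cases p with
    | nil => exact absurd rfl hi
    | @cons _ j _ h q =>
      refine ⟨j, fun h => absurd h hi, fun _ => ⟨h, ?_⟩⟩
      have := SimpleGraph.dist_le q
      rw [SimpleGraph.Walk.length_cons] at hp
      omega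
  choose f hfr hf using hstep
  have hpar : IsParentFunction r f := by
    refine ⟨hfr r rfl, fun i => ?_⟩
    induction hd : T.dist i r using Nat.strong_induction_on generalizing i with
    | _ d ih =>
      by_cases hi : i = r
      · exact ⟨0, hi⟩
      · obtain ⟨k, hk⟩ := ih _ (hd ▸ (hf i hi).2) (f i) rfl
        exact ⟨k + 1, hk⟩
  refine ⟨f, hpar, ?_⟩
  rw [← SimpleGraph.edgeFinset_inj]
  refine Finset.eq_of_subset_of_card_le ?_ ?_
  · rw [hpar.edgeFinset_parentGraph]
    intro e he
    obtain ⟨i, hi, rfl⟩ := mem_image.1 he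
    simpa using (hf i (by simpa using hi)).1
  · have h1 := hT.card_edgeFinset
    have h2 := hpar.isTree.card_edgeFinset
    omega

/-- The matrix with rows `e_i - e_{f i}` for `i ≠ r`, and row `e_r` at the root. -/
def parentMatrix (R : Type*) [CommRing R] (r : V) (f : V → V) : Matrix V V R :=
  Matrix.of fun i => if i = r then Pi.single r 1 else Pi.single i 1 - Pi.single (f i) 1

theorem IsParentFunction.det_parentMatrix {r : V} {f : V → V} (hf : IsParentFunction r f) :
    (parentMatrix R r f).det = 1 := by
  classical
  let d : V → ℕ := fun i => Nat.find (hf.2 i)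
  have hd : ∀ i, i ≠ r → d (f i) < d i := by
    intro i hi
    have hs : f^[d i] i = r := Nat.find_spec (hf.2 i)
    obtain ⟨k, hk⟩ : ∃ k, d i = k + 1 := Nat.exists_eq_succ_of_ne_zero (by
      intro h0; rw [h0] at hs; exact hi hs)
    rw [hk, Nat.lt_succ_iff]
    rw [hk] at hs
    exact Nat.find_min' _ hs
  have hoff : ∀ i j, i ≠ j → ¬ d j < d i → parentMatrix R r f i j = 0 := by
    intro i j hij hlt
    by_cases hi : i = r
    · subst hi; simp [parentMatrix, hij.symm]
    · have : j ≠ f i := by rintro rfl; exact hlt (hd i hi)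
      simp [parentMatrix, hi, hij.symm, this]
  have hdiag : ∀ i, parentMatrix R r f i i = 1 := by
    intro i
    by_cases hi : i = r
    · subst hi; simp [parentMatrix]
    · simp [parentMatrix, hi, (hf.apply_ne hi).symm]
  have hbt : BlockTriangular (parentMatrix R r f) (fun i => OrderDual.toDual (d i)) := by
    intro i j hij
    have hij : d i < d j := hij
    exact hoff i j (by rintro rfl; omega) (by omega)
  rw [hbt.det]
  refine Finset.prod_eq_one fun a _ => ?_
  have hone : (parentMatrix R r f).toSquareBlock (fun i => OrderDual.toDual (d i)) a = 1 := ?_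
  · rw [hone, det_one]
  ext ⟨i, hi⟩ ⟨j, hj⟩
  have hij : d i = d j := by simpa using hi.trans hj.symm
  by_cases h : i = j
  · subst h; simp [toSquareBlock_def, hdiag]
  · simp [toSquareBlock_def, h, hoff i j h (by omega)]

theorem det_parentMatrix_eq_zero [IsDomain R] {r : V} {f : V → V} (hr : f r = r)
    (hf : ¬ IsParentFunction r f) : (parentMatrix R r f).det = 0 := by
  classical
  obtain ⟨a, ha⟩ : ∃ a, ∀ k, f^[k] a ≠ r := by
    by_contra! h
    exact hf ⟨hr, h⟩
  refine exists_mulVec_eq_zero_iff.1 ⟨fun i => if ∃ k, f^[k] i = r then 0 else 1, ?_, ?_⟩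
  · intro h
    have := congrFun h a
    simp [ha] at this
  · ext i
    by_cases hi : i = r
    · subst hi
      have : ∃ k, f^[k] i = i := ⟨0, rfl⟩
      simp [parentMatrix, mulVec, this]
    · have : (∃ k, f^[k] (f i) = r) ↔ ∃ k, f^[k] i = r := by
        constructor
        · rintro ⟨k, hk⟩; exact ⟨k + 1, hk⟩
        · rintro ⟨k, hk⟩
          cases k with
          | zero => exact absurd hk hi
          | succ k => exact ⟨k, hk⟩
      have hrow : parentMatrix R r f i = Pi.single i 1 - Pi.single (f i) 1 := by
        ext j; simp [parentMatrix, hi]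
      change parentMatrix R r f i ⬝ᵥ _ = 0
      rw [hrow, sub_dotProduct]
      simp [this]

open scoped Classical in
theorem det_updateRow_weightedLaplacian_eq_sum [IsDomain R] (w : Sym2 V → R) (r : V) :
    ((weightedLaplacian w).updateRow r (Pi.single r 1)).det =
      ∑ f : V → V with IsParentFunction r f, ∏ i ∈ univ \ {r}, w s(i, f i) := by
  let c : V → V → R := fun i j => if i = r then (if j = r then 1 else 0) else w s(i, j)
  let h : V → V → V → R := fun i j =>
    if i = r then Pi.single r 1 else Pi.single i 1 - Pi.single j 1
  have hrow : (weightedLaplacian w).updateRow r (Pi.single r 1) =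
      Matrix.of fun i => ∑ j, c i j • h i j := by
    ext i j
    by_cases hi : i = r
    · subst hi; simp [c, h]
    · simp only [updateRow_ne hi, of_apply, Finset.sum_apply, Pi.smul_apply, c, h, hi, if_false,
        weightedLaplacian, Matrix.sub_apply, Pi.sub_apply, smul_eq_mul, mul_sub,
        Finset.sum_sub_distrib]
      congr 1
      · by_cases hij : i = j
        · subst hij; simp
        · simp [hij, Ne.symm hij]
      · simp [Pi.single_apply]
  have hexp : ((weightedLaplacian w).updateRow r (Pi.single r 1)).det =
      ∑ f : V → V, (∏ i, c i (f i)) * (parentMatrix R r f).det := by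
    rw [hrow]
    refine ((detRowAlternating (R := R) (n := V)).toMultilinearMap.map_sum
      (fun i j => c i j • h i j)).trans (Finset.sum_congr rfl fun f _ => ?_)
    exact (detRowAlternating (R := R) (n := V)).toMultilinearMap.map_smul_univ
      (fun i => c i (f i)) (fun i => h i (f i))
  rw [hexp, Finset.sum_filter]
  refine Finset.sum_congr rfl fun f _ => ?_
  split_ifs with hf
  · rw [hf.det_parentMatrix, mul_one, Finset.sdiff_singleton_eq_erase,
      ← Finset.mul_prod_erase univ _ (mem_univ r)]
    have : c r (f r) = 1 := by simp [c, hf.1]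
    rw [this, one_mul]
    exact Finset.prod_congr rfl fun i hi => by simp [c, ne_of_mem_erase hi]
  · by_cases hr : f r = r
    · rw [det_parentMatrix_eq_zero hr hf, mul_zero]
    · rw [Finset.prod_eq_zero (mem_univ r) (by simp [c, hr]), zero_mul]

open scoped Classical in
/-- The weighted matrix-tree theorem for the complete graph. -/
theorem sum_isTree_prod_edgeFinset_eq_det [IsDomain R] (w : Sym2 V → R) (r : V) :
    ∑ T : SimpleGraph V with T.IsTree, ∏ e ∈ T.edgeFinset, w e =
      ((weightedLaplacian w).updateRow r (Pi.single r 1)).det := by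
  rw [det_updateRow_weightedLaplacian_eq_sum]
  symm
  refine Finset.sum_bij (fun f _ => parentGraph f) ?_ ?_ ?_ ?_
  · intro f hf
    simpa using (mem_filter.1 hf).2.isTree
  · intro f hf g hg h
    exact (mem_filter.1 hf).2.eq_of_parentGraph_eq (mem_filter.1 hg).2 h
  · intro T hT
    obtain ⟨f, hf, rfl⟩ := (mem_filter.1 hT).2.exists_parentFunction r
    exact ⟨f, by simpa using hf, rfl⟩
  · intro f hf
    have hf := (mem_filter.1 hf).2
    rw [hf.edgeFinset_parentGraph, Finset.prod_image (by convert hf.injOn_edge)]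

theorem weightedLaplacian_mulVec_one (w : Sym2 V → R) :
    weightedLaplacian w *ᵥ (fun _ => 1) = 0 := by
  ext i
  rw [weightedLaplacian, sub_mulVec, Pi.sub_apply, mulVec_diagonal]
  simp [mulVec, dotProduct]

open scoped Classical in
theorem det_updateRow_weightedLaplacian [IsDomain R] (w : Sym2 V → R) (r : V) (v : V → R) :
    ((weightedLaplacian w).updateRow r v).det =
      (∑ i, v i) * ∑ T : SimpleGraph V with T.IsTree, ∏ e ∈ T.edgeFinset, w e := by
  have hzero : ((weightedLaplacian w).updateRow r (v - (∑ i, v i) • Pi.single r 1)).det = 0 := by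
    refine exists_mulVec_eq_zero_iff.1 ⟨fun _ => 1, fun h => one_ne_zero (congrFun h r), ?_⟩
    ext i
    by_cases hi : i = r
    · subst hi
      simp [mulVec, dotProduct, Finset.sum_sub_distrib, ← Finset.mul_sum]
    · simpa [mulVec, hi] using congrFun (weightedLaplacian_mulVec_one w) i
  have hv : v = (v - (∑ i, v i) • Pi.single r 1) + (∑ i, v i) • Pi.single r 1 := by simp
  conv_lhs => rw [hv]
  rw [det_updateRow_add, det_updateRow_smul, hzero, zero_add,
    sum_isTree_prod_edgeFinset_eq_det w r]

theorem det_weightedLaplacian [IsDomain R] [Nonempty V] (w : Sym2 V → R) :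
    (weightedLaplacian w).det = 0 :=
  exists_mulVec_eq_zero_iff.1 ⟨fun _ => 1,
    fun h => one_ne_zero (congrFun h (Classical.arbitrary V)), weightedLaplacian_mulVec_one w⟩

end MatrixTree

open scoped Classical in
/-- Kirchhoff-type identity: the sum over all spanning trees `T` of the complete graph on
`{1, …, N}` of the product of `cos (θ_l - θ_m)` over the edges `{l, m}` of `T`. -/
theorem stmt2 (N : ℕ) (hN : 2 ≤ N) (θ : Fin N → ℝ)
    (hne : ∑ i, ∑ j, Real.cos (θ i - θ j) ≠ 0) :
    ∑ T ∈ Finset.univ.filter (fun T : SimpleGraph (Fin N) => T.IsTree),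
        ∏ e ∈ T.edgeFinset, edgeWeight N θ e
      = (2 * ∏ i, kappa N θ i - ∑ k, ∏ i ∈ Finset.univ \ {k}, kappa N θ i)
          / (∑ i, ∑ j, Real.cos (θ i - θ j)) := by
  have : Nonempty (Fin N) := ⟨⟨0, by omega⟩⟩
  set S := ∑ i, ∑ j, Real.cos (θ i - θ j) with hS
  set τ := ∑ T ∈ Finset.univ.filter (fun T : SimpleGraph (Fin N) => T.IsTree),
        ∏ e ∈ T.edgeFinset, edgeWeight N θ e with hτ
  set a := ∑ i, Real.cos (θ i) with ha
  set b := ∑ i, Real.sin (θ i) with hb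
  have hκ : ∀ i, kappa N θ i = a * Real.cos (θ i) + b * Real.sin (θ i) := by
    intro i
    simp only [kappa, Real.cos_sub, Finset.sum_add_distrib, ha, hb, Finset.sum_mul]
  have hκS : ∑ i, kappa N θ i = S := by
    simp only [kappa, hS]
    exact Finset.sum_comm
  have hSab : S = a ^ 2 + b ^ 2 := by
    simp only [← hκS, hκ, Finset.sum_add_distrib, ← Finset.mul_sum, ← ha, ← hb]
    ring
  let z : Fin N → ℝ := fun i => a * Real.sin (θ i) - b * Real.cos (θ i)
  have hz : ∀ i, z i ^ 2 = S - kappa N θ i ^ 2 := by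
    intro i
    simp only [z, hκ, hSab]
    linear_combination (a ^ 2 + b ^ 2) * Real.sin_sq_add_cos_sq (θ i)
  have hmat : weightedLaplacian (edgeWeight N θ) +
        vecMulVec (fun i => kappa N θ i / S) (kappa N θ) =
      diagonal (kappa N θ) + vecMulVec (fun i => -z i / S) z := by
    have hdeg : (fun i => ∑ j, edgeWeight N θ s(i, j)) = kappa N θ := by
      funext i
      refine Finset.sum_congr rfl fun j _ => ?_
      rw [Sym2.eq_swap]
      rfl
    ext i j
    have hw : edgeWeight N θ s(i, j) = Real.cos (θ i - θ j) := rfl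
    have hc : Real.cos (θ i - θ j) * S = kappa N θ i * kappa N θ j + z i * z j := by
      simp only [z, hκ, hSab, Real.cos_sub]
      ring
    simp only [weightedLaplacian, hdeg, Matrix.add_apply, Matrix.sub_apply, of_apply, hw,
      vecMulVec_apply]
    field_simp
    linear_combination -hc
  have hdet := congrArg Matrix.det hmat
  rw [det_add_vecMulVec_eq_sum_updateRow, det_add_vecMulVec_eq_sum_updateRow,
    det_weightedLaplacian, det_diagonal] at hdet
  simp only [det_updateRow_weightedLaplacian, det_updateRow_diagonal, hκS] at hdet
  rw [← hτ, ← Finset.sum_mul, ← Finset.sum_div, hκS, div_self hne] at hdet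
  have hterm : ∀ i, -z i / S * (z i * ∏ j ∈ univ \ {i}, kappa N θ j) =
      kappa N θ i / S * (∏ j, kappa N θ j) - ∏ j ∈ univ \ {i}, kappa N θ j := by
    intro i
    have hp : ∏ j, kappa N θ j = kappa N θ i * ∏ j ∈ univ \ {i}, kappa N θ j := by
      rw [Finset.sdiff_singleton_eq_erase, Finset.mul_prod_erase univ _ (mem_univ i)]
    rw [hp]
    field_simp
    linear_combination (-∏ j ∈ univ \ {i}, kappa N θ j) * hz i
  simp only [hterm] at hdet
  rw [Finset.sum_sub_distrib, ← Finset.sum_mul, ← Finset.sum_div, hκS, div_self hne] at hdet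
  rw [eq_div_iff hne]
  linear_combination hdet
end

section
/- Let V = {0, π/2}^N minus the two constant vectors. Then min_{θ ∈ V} ‖f(θ)‖² = N(N−1), and max_{θ ∈ V} ‖f(θ)‖² = N³/4 if N is even and N(N²−1)/4 if N is odd. Moreover the minimum is attained exactly at the vertices whose image is a permutation of ±(1,1,...,1,−(N−1)), and the maximum exactly at the vertices with ⌊N/2⌋ coordinates of one value and ⌈N/2⌉ of the other. -/
open Real Finset

/-- The Kuramoto interaction vector field `f_i(θ) = Σ_j sin (θ_j - θ_i)`. -/
noncomputable def kuraF (N : ℕ) (θ : Fin N → ℝ) : Fin N → ℝ :=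
  fun i => ∑ j, Real.sin (θ j - θ i)

/-- The vertex set `V`: the non-constant vertices of the cube `{0, π/2}^N`. -/
def vertexSet (N : ℕ) : Set (Fin N → ℝ) :=
  {θ | (∀ i, θ i = 0 ∨ θ i = Real.pi / 2) ∧ (∃ i, θ i = 0) ∧ ∃ j, θ j = Real.pi / 2}

open scoped Classical in
/-- The number of coordinates of `θ` equal to `0`. -/
noncomputable def numZeros (N : ℕ) (θ : Fin N → ℝ) : ℕ :=
  (Finset.univ.filter fun k => θ k = 0).card

lemma numZeros_pos {N : ℕ} {θ : Fin N → ℝ} (hθ : θ ∈ vertexSet N) : 1 ≤ numZeros N θ := by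
  obtain ⟨-, ⟨i, hi⟩, -⟩ := hθ
  exact Finset.card_pos.mpr ⟨i, by simp [hi]⟩

lemma numZeros_lt {N : ℕ} {θ : Fin N → ℝ} (hθ : θ ∈ vertexSet N) : numZeros N θ < N := by
  obtain ⟨-, -, j, hj⟩ := hθ
  have h : numZeros N θ < (Finset.univ : Finset (Fin N)).card := by
    refine Finset.card_lt_card (Finset.filter_ssubset.mpr ⟨j, Finset.mem_univ j, ?_⟩)
    rw [hj]
    positivity
  simpa using h

open scoped Classical in
lemma sum_vertex {N : ℕ} {θ : Fin N → ℝ} (hθ : ∀ i, θ i = 0 ∨ θ i = Real.pi / 2) (g : ℝ → ℝ) :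
    ∑ i, g (θ i) = numZeros N θ * g 0 + (N - numZeros N θ) * g (Real.pi / 2) := by
  have h : ∀ i, g (θ i) = g (Real.pi / 2) + (if θ i = 0 then g 0 - g (Real.pi / 2) else 0) := by
    intro i
    split_ifs with h0
    · rw [h0]; ring
    · rw [(hθ i).resolve_left h0]; ring
  rw [Finset.sum_congr rfl fun i _ => h i, Finset.sum_add_distrib, ← Finset.sum_filter,
    Finset.sum_const, Finset.sum_const, Finset.card_univ, Fintype.card_fin, nsmul_eq_mul,
    nsmul_eq_mul, numZeros]
  ring

lemma sum_kuraF_sq {N : ℕ} {θ : Fin N → ℝ} (hθ : θ ∈ vertexSet N) :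
    ∑ i, kuraF N θ i ^ 2 = N * (numZeros N θ * (N - numZeros N θ)) := by
  have hsum := sum_vertex hθ.1 fun x => (∑ j, Real.sin (θ j - x)) ^ 2
  simp only [sum_vertex hθ.1 fun y => Real.sin (y - 0),
    sum_vertex hθ.1 fun y => Real.sin (y - Real.pi / 2)] at hsum
  simp only [kuraF]
  rw [hsum]
  simp
  ring

lemma exists_vertex_numZeros {N k : ℕ} (hk : 1 ≤ k) (hkN : k < N) :
    ∃ θ ∈ vertexSet N, numZeros N θ = k := by
  have hpi : Real.pi / 2 ≠ 0 := by positivity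
  refine ⟨fun i => if (i : ℕ) < k then 0 else Real.pi / 2,
    ⟨fun i => ?_, ⟨⟨0, by lia⟩, if_pos hk⟩, ⟨⟨k, hkN⟩, by simp⟩⟩, ?_⟩
  · by_cases h : (i : ℕ) < k <;> simp [h]
  · have h : ∀ i : Fin N, (if (i : ℕ) < k then (0 : ℝ) else Real.pi / 2) = 0 ↔ (i : ℕ) < k := by
      intro i
      split_ifs with hi <;> simp [hi, hpi]
    simp only [numZeros, h]
    rw [Fin.card_filter_val_lt, min_eq_right hkN.le]

lemma sub_one_le_mul_sub {N k : ℝ} (hk : 1 ≤ k) (hkN : k + 1 ≤ N) : N - 1 ≤ k * (N - k) := by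
  nlinarith [mul_nonneg (sub_nonneg.mpr hk) (sub_nonneg.mpr hkN)]

lemma mul_sub_eq_sub_one_iff {N k : ℕ} (hkN : k < N) :
    (k : ℝ) * (N - k) = N - 1 ↔ k = 1 ∨ k = N - 1 := by
  have h : (k : ℝ) * (N - k) = N - 1 ↔ ((k : ℝ) - 1) * (N - (k + 1)) = 0 := by
    constructor <;> intro h <;> linarith
  rw [h, mul_eq_zero, sub_eq_zero, sub_eq_zero, Nat.cast_eq_one]
  norm_cast
  lia

lemma natCast_mul_sub_le (N k : ℕ) :
    (N : ℝ) * (k * (N - k)) ≤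
      if Even N then (N : ℝ) ^ 3 / 4 else (N : ℝ) * ((N : ℝ) ^ 2 - 1) / 4 := by
  have hN : (0 : ℝ) ≤ N := N.cast_nonneg
  split_ifs with h
  · nlinarith [mul_nonneg hN (sq_nonneg ((N : ℝ) - 2 * k))]
  · have hodd : (1 : ℤ) ≤ ((N : ℤ) - 2 * k) ^ 2 := by
      have : (N : ℤ) - 2 * k ≠ 0 := fun h0 => h ⟨k, by lia⟩
      exact Int.add_one_le_iff.mpr (sq_pos_iff.mpr this)
    have hodd' : (1 : ℝ) ≤ ((N : ℝ) - 2 * k) ^ 2 := by exact_mod_cast hodd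
    nlinarith [mul_le_mul_of_nonneg_left hodd' hN]

lemma natCast_mul_sub_eq_iff {N : ℕ} (hN : N ≠ 0) (k : ℕ) :
    ((N : ℝ) * (k * (N - k)) =
      if Even N then (N : ℝ) ^ 3 / 4 else (N : ℝ) * ((N : ℝ) ^ 2 - 1) / 4) ↔
      k = N / 2 ∨ k = (N + 1) / 2 := by
  have hN' : (N : ℝ) ≠ 0 := Nat.cast_ne_zero.mpr hN
  split_ifs with h
  · have key : (N : ℝ) * (k * (N - k)) = (N : ℝ) ^ 3 / 4 ↔ (N : ℝ) * ((N : ℝ) - 2 * k) ^ 2 = 0 := by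
      constructor <;> intro h <;> linarith
    rw [key, mul_eq_zero_iff_left hN', sq_eq_zero_iff, sub_eq_zero]
    norm_cast
    obtain ⟨m, rfl⟩ := h
    lia
  · have key : (N : ℝ) * (k * (N - k)) = (N : ℝ) * ((N : ℝ) ^ 2 - 1) / 4 ↔
        (N : ℝ) * (((N : ℝ) - 2 * k) ^ 2 - 1) = 0 := by
      constructor <;> intro h <;> linarith
    rw [key, mul_eq_zero_iff_left hN', sub_eq_zero, sq_eq_one_iff,
      sub_eq_iff_eq_add, sub_eq_iff_eq_add]
    obtain ⟨m, rfl⟩ := Nat.not_even_iff_odd.mp h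
    have h1 : ((2 * m + 1 : ℕ) : ℝ) = 1 + 2 * k ↔ k = m := by
      norm_cast
      lia
    have h2 : ((2 * m + 1 : ℕ) : ℝ) = -1 + 2 * k ↔ k = m + 1 := by
      rw [neg_add_eq_sub, eq_sub_iff_add_eq]
      norm_cast
      lia
    rw [h1, h2]
    lia

theorem stmt13 (N : ℕ) (hN : 2 ≤ N) :
    IsLeast {r : ℝ | ∃ θ ∈ vertexSet N, r = ∑ i, kuraF N θ i ^ 2}
        ((N : ℝ) * ((N : ℝ) - 1)) ∧
    IsGreatest {r : ℝ | ∃ θ ∈ vertexSet N, r = ∑ i, kuraF N θ i ^ 2}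
        (if Even N then (N : ℝ) ^ 3 / 4 else (N : ℝ) * ((N : ℝ) ^ 2 - 1) / 4) ∧
    (∀ θ ∈ vertexSet N,
      (∑ i, kuraF N θ i ^ 2 = (N : ℝ) * ((N : ℝ) - 1) ↔
        numZeros N θ = 1 ∨ numZeros N θ = N - 1)) ∧
    (∀ θ ∈ vertexSet N,
      (∑ i, kuraF N θ i ^ 2
          = (if Even N then (N : ℝ) ^ 3 / 4 else (N : ℝ) * ((N : ℝ) ^ 2 - 1) / 4) ↔
        numZeros N θ = N / 2 ∨ numZeros N θ = (N + 1) / 2)) := by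
  have hN0 : N ≠ 0 := by lia
  have hN' : (N : ℝ) ≠ 0 := Nat.cast_ne_zero.mpr hN0
  have hmin : ∀ θ ∈ vertexSet N,
      (∑ i, kuraF N θ i ^ 2 = (N : ℝ) * ((N : ℝ) - 1) ↔
        numZeros N θ = 1 ∨ numZeros N θ = N - 1) := by
    intro θ hθ
    rw [sum_kuraF_sq hθ, mul_right_inj' hN', mul_sub_eq_sub_one_iff (numZeros_lt hθ)]
  have hmax : ∀ θ ∈ vertexSet N,
      (∑ i, kuraF N θ i ^ 2
          = (if Even N then (N : ℝ) ^ 3 / 4 else (N : ℝ) * ((N : ℝ) ^ 2 - 1) / 4) ↔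
        numZeros N θ = N / 2 ∨ numZeros N θ = (N + 1) / 2) := by
    intro θ hθ
    rw [sum_kuraF_sq hθ, natCast_mul_sub_eq_iff hN0]
  refine ⟨⟨?_, ?_⟩, ⟨?_, ?_⟩, hmin, hmax⟩
  · obtain ⟨θ, hθ, hk⟩ := exists_vertex_numZeros (N := N) le_rfl (by lia)
    exact ⟨θ, hθ, ((hmin θ hθ).mpr (Or.inl hk)).symm⟩
  · rintro r ⟨θ, hθ, rfl⟩
    rw [sum_kuraF_sq hθ]
    exact mul_le_mul_of_nonneg_left
      (sub_one_le_mul_sub (mod_cast numZeros_pos hθ) (mod_cast numZeros_lt hθ)) N.cast_nonneg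
  · obtain ⟨θ, hθ, hk⟩ := exists_vertex_numZeros (N := N) (k := N / 2) (by lia) (by lia)
    exact ⟨θ, hθ, ((hmax θ hθ).mpr (Or.inl hk)).symm⟩
  · rintro r ⟨θ, hθ, rfl⟩
    rw [sum_kuraF_sq hθ]
    exact natCast_mul_sub_le N _
end

section
/- For every γ > 0 and every integer N ≥ 2, P_sync(γ, N) ≥ ( erf( γN/(2√2) ) )^{N}, where erf(x) = (2/√π) ∫_0^x e^{−t²} dt. -/
open Real Matrix Finset MeasureTheory ProbabilityTheory

/-- The Jacobian `J(θ)`: `J_ij = cos (θ_i - θ_j)` off the diagonal and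
`J_ii = -Σ_{k ≠ i} cos (θ_k - θ_i)`. -/
noncomputable def Jmat (N : ℕ) (θ : Fin N → ℝ) : Matrix (Fin N) (Fin N) ℝ :=
  Matrix.of fun i j =>
    if i = j then -∑ k ∈ Finset.univ \ {i}, Real.cos (θ k - θ i)
    else Real.cos (θ i - θ j)

/-- The set of frequency samples `ω` for which the (mean-adjusted) Kuramoto system with
coupling `γ` has a stable fully synchronized solution: some `θ` with
`ω_i - (1/N) Σ_j ω_j + γ f_i(θ) = 0` for all `i` and `J(θ)` negative semidefinite with
one-dimensional kernel. -/
def syncSet (N : ℕ) (γ : ℝ) : Set (Fin N → ℝ) :=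
  {ω | ∃ θ : Fin N → ℝ,
    (∀ i, ω i - (∑ j, ω j) / N + γ * kuraF N θ i = 0) ∧
    (-(Jmat N θ)).PosSemidef ∧
    Module.finrank ℝ (LinearMap.ker (Matrix.toLin' (Jmat N θ))) = 1}

/-- `P_sync(γ, N)`: the probability, for `ω` a vector of `N` i.i.d. standard Gaussian
random variables, that the Kuramoto system with coupling `γ` fully synchronizes. -/
noncomputable def Psync (γ : ℝ) (N : ℕ) : ℝ :=
  ((Measure.pi fun _ : Fin N => gaussianReal 0 1) (syncSet N γ)).toReal

/-- The error function `erf x = (2/√π) ∫_0^x e^{-t²} dt`. -/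
noncomputable def erf (x : ℝ) : ℝ :=
  (2 / Real.sqrt Real.pi) * ∫ t in (0 : ℝ)..x, Real.exp (-t ^ 2)

/-- The potential whose gradient is `Ω_i + γ f_i(θ)`. -/
noncomputable def kuraPotential (N : ℕ) (γ : ℝ) (Ω θ : Fin N → ℝ) : ℝ :=
  ∑ i, Ω i * θ i + γ / 2 * ∑ i, ∑ j, Real.cos (θ i - θ j)

lemma sum_sin_mul_sub {N : ℕ} (θ v : Fin N → ℝ) :
    ∑ i, ∑ j, (-Real.sin (θ i - θ j) * (v i - v j)) = 2 * ∑ i, kuraF N θ i * v i := by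
  have h1 : ∑ i, ∑ j, (-Real.sin (θ i - θ j) * (v i - v j))
      = ∑ i, ∑ j, Real.sin (θ j - θ i) * v i + ∑ i, ∑ j, Real.sin (θ i - θ j) * v j := by
    simp only [← Finset.sum_add_distrib]
    refine Finset.sum_congr rfl fun i _ => Finset.sum_congr rfl fun j _ => ?_
    rw [← neg_sub (θ i) (θ j), Real.sin_neg]
    ring
  have h2 : ∑ i, ∑ j, Real.sin (θ i - θ j) * v j = ∑ i, ∑ j, Real.sin (θ j - θ i) * v i :=
    Finset.sum_comm
  rw [h1, h2, ← two_mul]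
  simp only [kuraF, Finset.sum_mul]

lemma hasDerivAt_kuraPotential_line {N : ℕ} (γ : ℝ) (Ω θ v : Fin N → ℝ) :
    HasDerivAt (fun t : ℝ => kuraPotential N γ Ω (fun i => θ i + t * v i))
      (∑ i, (Ω i + γ * kuraF N θ i) * v i) 0 := by
  have hline : ∀ i, HasDerivAt (fun t : ℝ => θ i + t * v i) (v i) 0 := fun i => by
    simpa using ((hasDerivAt_id (0 : ℝ)).mul_const (v i)).const_add (θ i)
  have hcos : ∀ i j, HasDerivAt (fun t : ℝ => Real.cos ((θ i + t * v i) - (θ j + t * v j)))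
      (-Real.sin (θ i - θ j) * (v i - v j)) 0 := fun i j => by
    simpa using ((hline i).sub (hline j)).cos
  have h := (HasDerivAt.fun_sum (u := Finset.univ) fun i _ => (hline i).const_mul (Ω i)).add
    ((HasDerivAt.fun_sum (u := Finset.univ) fun i _ =>
      HasDerivAt.fun_sum (u := Finset.univ) fun j _ => hcos i j).const_mul (γ / 2))
  refine h.congr_deriv ?_
  rw [sum_sin_mul_sub]
  simp only [add_mul, Finset.sum_add_distrib, mul_assoc, ← Finset.mul_sum]
  ring

/-- Optimality condition at a maximizer of the potential over configurations contained in a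
quarter circle. -/
lemma sum_force_mul_nonpos {N : ℕ} {γ : ℝ} {Ω θ v : Fin N → ℝ}
    (hθ : ∀ i j, θ i - θ j ≤ π / 2)
    (hmax : ∀ φ : Fin N → ℝ, (∀ i j, φ i - φ j ≤ π / 2) →
      kuraPotential N γ Ω φ ≤ kuraPotential N γ Ω θ)
    (hv : ∀ i j, θ i - θ j = π / 2 → v i - v j < 0) :
    ∑ i, (Ω i + γ * kuraF N θ i) * v i ≤ 0 := by
  have hd := (hasDerivAt_kuraPotential_line γ Ω θ v).hasDerivWithinAt (s := Set.Ioi 0)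
  rw [hasDerivWithinAt_iff_tendsto_slope' (by simp)] at hd
  refine le_of_tendsto hd ?_
  have hfeas : ∀ᶠ t in nhdsWithin (0 : ℝ) (Set.Ioi 0),
      ∀ i j, (θ i + t * v i) - (θ j + t * v j) ≤ π / 2 := by
    simp only [Filter.eventually_all]
    intro i j
    rcases (hθ i j).lt_or_eq with h | h
    · have hc : Continuous fun t : ℝ => (θ i + t * v i) - (θ j + t * v j) := by fun_prop
      have h0 := hc.continuousAt (x := 0).eventually_lt_const (u := π / 2) (by simpa using h)
      exact (h0.filter_mono nhdsWithin_le_nhds).mono fun t ht => ht.le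
    · filter_upwards [self_mem_nhdsWithin] with t ht
      have := mul_neg_of_pos_of_neg (Set.mem_Ioi.1 ht) (hv i j h)
      linarith
  filter_upwards [hfeas, self_mem_nhdsWithin] with t ht ht0
  have := hmax _ ht
  rw [slope_def_field]
  exact div_nonpos_of_nonpos_of_nonneg (by simpa using this) (by simpa using (Set.mem_Ioi.1 ht0).le)

lemma exists_isMax_kuraPotential {N : ℕ} (i₀ : Fin N) (γ : ℝ) {Ω : Fin N → ℝ}
    (hΩ : ∑ i, Ω i = 0) :
    ∃ θ : Fin N → ℝ, (∀ i j, θ i - θ j ≤ π / 2) ∧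
      ∀ φ : Fin N → ℝ, (∀ i j, φ i - φ j ≤ π / 2) →
        kuraPotential N γ Ω φ ≤ kuraPotential N γ Ω θ := by
  set K : Set (Fin N → ℝ) := {θ | (∀ i j, θ i - θ j ≤ π / 2) ∧ θ i₀ = 0} with hK
  have hclosed : IsClosed K := by
    refine IsClosed.and ?_ (isClosed_eq (by fun_prop) (by fun_prop))
    simp only [Set.ofPred_forall]
    exact isClosed_iInter fun i => isClosed_iInter fun j =>
      isClosed_le (by fun_prop) (by fun_prop)
  have hcomp : IsCompact K := by
    refine (isCompact_univ_pi fun _ : Fin N =>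
      isCompact_Icc (a := -(π / 2)) (b := π / 2)).of_isClosed_subset hclosed ?_
    rintro θ ⟨h, h0⟩ i -
    constructor
    · linarith [h i₀ i]
    · linarith [h i i₀]
  have hne : K.Nonempty := ⟨0, by
    refine ⟨fun i j => ?_, rfl⟩
    simpa using Real.pi_div_two_pos.le⟩
  have hcont : Continuous (kuraPotential N γ Ω) := by
    unfold kuraPotential
    fun_prop
  obtain ⟨θ, hθK, hθ⟩ := hcomp.exists_isMaxOn hne hcont.continuousOn
  refine ⟨θ, hθK.1, fun φ hφ => ?_⟩
  have hshift : kuraPotential N γ Ω φ = kuraPotential N γ Ω fun i => φ i - φ i₀ := by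
    simp only [kuraPotential, mul_sub, Finset.sum_sub_distrib, ← Finset.sum_mul, hΩ,
      sub_sub_sub_cancel_right]
    ring
  rw [hshift]
  exact hθ (show (fun i => φ i - φ i₀) ∈ K from ⟨fun i j => by simpa using hφ i j, sub_self _⟩)

lemma natCast_le_kuraF_sub {N : ℕ} {θ : Fin N → ℝ} (hθ : ∀ i j, θ i - θ j ≤ π / 2)
    {i k : Fin N} (hik : θ i - θ k = π / 2) : (N : ℝ) ≤ kuraF N θ k - kuraF N θ i := by
  unfold kuraF
  rw [← Finset.sum_sub_distrib]
  have h : ∀ j ∈ (Finset.univ : Finset (Fin N)),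
      (1 : ℝ) ≤ Real.sin (θ j - θ k) - Real.sin (θ j - θ i) := by
    intro j _
    have e : θ j - θ i = -(π / 2 - (θ j - θ k)) := by linarith
    rw [e, Real.sin_neg, Real.sin_pi_div_two_sub]
    have h0 : 0 ≤ θ j - θ k := by linarith [hθ i j]
    have hs := Real.sin_nonneg_of_nonneg_of_le_pi h0 (by linarith [hθ j k, Real.pi_pos])
    have hc := Real.cos_nonneg_of_neg_pi_div_two_le_of_le
      (by linarith [Real.pi_pos]) (hθ j k)
    nlinarith [Real.sin_sq_add_cos_sq (θ j - θ k), mul_nonneg hs hc]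
  simpa using Finset.sum_le_sum h

/-- If the frequencies differ pairwise by less than `γ N`, there is an equilibrium contained in an
open quarter circle. -/
lemma exists_equilibrium {N : ℕ} (i₀ : Fin N) {γ : ℝ} (hγ : 0 < γ) {Ω : Fin N → ℝ}
    (hΩ : ∑ i, Ω i = 0) (hspread : ∀ i k, Ω i - Ω k < γ * N) :
    ∃ θ : Fin N → ℝ, (∀ i j, θ i - θ j < π / 2) ∧ ∀ i, Ω i + γ * kuraF N θ i = 0 := by
  obtain ⟨θ, hθ, hmax⟩ := exists_isMax_kuraPotential i₀ γ hΩ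
  have hlt : ∀ i j, θ i - θ j < π / 2 := by
    by_contra! hcon
    obtain ⟨a, b, hab⟩ := hcon
    have hab : θ a - θ b = π / 2 := le_antisymm (hθ a b) hab
    set A : Finset (Fin N) := Finset.univ.filter fun i => θ i = θ a with hA
    set B : Finset (Fin N) := Finset.univ.filter fun i => θ i = θ b with hB
    have hπ := Real.pi_pos
    have hAne : 0 < #A := Finset.card_pos.2 ⟨a, by simp [hA]⟩
    have hBne : 0 < #B := Finset.card_pos.2 ⟨b, by simp [hB]⟩
    set F : Fin N → ℝ := fun i => Ω i + γ * kuraF N θ i with hF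
    have hle := sum_force_mul_nonpos
      (v := fun i => (if θ i = θ b then (#A : ℝ) else 0) - if θ i = θ a then (#B : ℝ) else 0)
      hθ hmax (by
        intro i j hij
        have hi : θ i = θ a := by linarith [hθ i b, hθ a j]
        have hj : θ j = θ b := by linarith [hθ i b, hθ a j]
        have h1 : θ i ≠ θ b := fun h => by linarith
        have h2 : θ j ≠ θ a := fun h => by linarith
        have h3 : θ a ≠ θ b := fun h => by linarith
        rw [if_neg h1, if_pos hi, if_pos hj, if_neg h2]
        have : (0 : ℝ) < #A := by exact_mod_cast hAne
        have : (0 : ℝ) < #B := by exact_mod_cast hBne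
        linarith)
    have hsum : ∑ i, (Ω i + γ * kuraF N θ i) *
        ((if θ i = θ b then (#A : ℝ) else 0) - if θ i = θ a then (#B : ℝ) else 0)
        = ∑ i ∈ A, ∑ k ∈ B, (F k - F i) := by
      simp only [mul_sub, Finset.sum_sub_distrib, mul_ite, mul_zero, ← Finset.sum_filter,
        Finset.sum_const, nsmul_eq_mul, Finset.mul_sum, ← hA, ← hB, hF]
      congr 1 <;> exact Finset.sum_congr rfl fun _ _ => mul_comm _ _
    have hpos : 0 < ∑ i ∈ A, ∑ k ∈ B, (F k - F i) := by
      refine Finset.sum_pos (fun i hi => Finset.sum_pos (fun k hk => ?_)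
        (Finset.card_pos.1 hBne)) (Finset.card_pos.1 hAne)
      have hi : θ i = θ a := by simpa [hA] using hi
      have hk : θ k = θ b := by simpa [hB] using hk
      have h1 := natCast_le_kuraF_sub hθ (i := i) (k := k) (by linarith)
      have h2 := mul_le_mul_of_nonneg_left h1 hγ.le
      have h3 := hspread i k
      simp only [hF]
      linarith
    linarith
  refine ⟨θ, hlt, fun i => ?_⟩
  have h := sum_force_mul_nonpos (v := fun i => Ω i + γ * kuraF N θ i) hθ hmax
    fun i j hij => absurd hij (hlt i j).ne
  have h0 := (Finset.sum_eq_zero_iff_of_nonneg fun i _ => mul_self_nonneg _).1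
    (le_antisymm h (Finset.sum_nonneg fun i _ => mul_self_nonneg _)) i (Finset.mem_univ i)
  exact mul_self_eq_zero.1 h0

lemma Jmat_mulVec {N : ℕ} (θ x : Fin N → ℝ) (i : Fin N) :
    (Jmat N θ *ᵥ x) i = ∑ j, Real.cos (θ i - θ j) * (x j - x i) := by
  have h : ∀ g : Fin N → ℝ, ∑ j, g j = g i + ∑ j ∈ Finset.univ \ {i}, g j := fun g => by
    rw [add_comm, Finset.sum_sdiff_eq_sub (Finset.subset_univ _)]
    simp
  simp only [Matrix.mulVec, dotProduct]
  rw [h, h fun j => Real.cos (θ i - θ j) * (x j - x i)]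
  have h2 : ∀ j ∈ Finset.univ \ {i}, Jmat N θ i j * x j
      = Real.cos (θ i - θ j) * (x j - x i) + Real.cos (θ j - θ i) * x i := by
    intro j hj
    have hne : i ≠ j := fun h => by simp [h] at hj
    rw [← neg_sub (θ i) (θ j), Real.cos_neg]
    simp only [Jmat, Matrix.of_apply, if_neg hne]
    ring
  rw [Finset.sum_congr rfl h2, Finset.sum_add_distrib, ← Finset.sum_mul]
  simp only [Jmat, Matrix.of_apply, if_true]
  ring

lemma two_mul_dotProduct_Jmat_mulVec {N : ℕ} (θ x : Fin N → ℝ) :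
    2 * (x ⬝ᵥ (Jmat N θ *ᵥ x)) = -∑ i, ∑ j, Real.cos (θ i - θ j) * (x i - x j) ^ 2 := by
  have h1 : x ⬝ᵥ (Jmat N θ *ᵥ x) = ∑ i, ∑ j, x i * (Real.cos (θ i - θ j) * (x j - x i)) := by
    simp only [dotProduct, Jmat_mulVec, Finset.mul_sum]
  have h2 : x ⬝ᵥ (Jmat N θ *ᵥ x) = ∑ i, ∑ j, x j * (Real.cos (θ i - θ j) * (x i - x j)) := by
    rw [h1, Finset.sum_comm]
    refine Finset.sum_congr rfl fun i _ => Finset.sum_congr rfl fun j _ => ?_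
    rw [← neg_sub (θ i) (θ j), Real.cos_neg]
  rw [two_mul]
  nth_rewrite 1 [h1]
  rw [h2]
  simp only [← Finset.sum_add_distrib, ← Finset.sum_neg_distrib]
  refine Finset.sum_congr rfl fun i _ => Finset.sum_congr rfl fun j _ => ?_
  ring

lemma cos_sub_pos_of_quarter {N : ℕ} {θ : Fin N → ℝ} (hθ : ∀ i j, θ i - θ j < π / 2)
    (i j : Fin N) : 0 < Real.cos (θ i - θ j) :=
  Real.cos_pos_of_mem_Ioo ⟨by linarith [hθ j i], hθ i j⟩

lemma posSemidef_neg_Jmat {N : ℕ} {θ : Fin N → ℝ} (hθ : ∀ i j, θ i - θ j < π / 2) :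
    (-(Jmat N θ)).PosSemidef := by
  refine Matrix.PosSemidef.of_dotProduct_mulVec_nonneg ?_ fun x => ?_
  · ext i j
    simp only [Matrix.conjTranspose_apply, Matrix.neg_apply, star_trivial, Jmat, Matrix.of_apply]
    by_cases h : i = j
    · subst h; rfl
    · rw [if_neg h, if_neg (Ne.symm h), ← neg_sub (θ i) (θ j), Real.cos_neg]
  · have h := two_mul_dotProduct_Jmat_mulVec θ x
    have h0 : 0 ≤ ∑ i, ∑ j, Real.cos (θ i - θ j) * (x i - x j) ^ 2 :=
      Finset.sum_nonneg fun i _ => Finset.sum_nonneg fun j _ =>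
        mul_nonneg (cos_sub_pos_of_quarter hθ i j).le (sq_nonneg _)
    rw [star_trivial, Matrix.neg_mulVec, dotProduct_neg]
    linarith

lemma finrank_ker_Jmat {N : ℕ} (i₀ : Fin N) {θ : Fin N → ℝ} (hθ : ∀ i j, θ i - θ j < π / 2) :
    Module.finrank ℝ (LinearMap.ker (Matrix.toLin' (Jmat N θ))) = 1 := by
  have hone : (fun _ => 1 : Fin N → ℝ) ∈ LinearMap.ker (Matrix.toLin' (Jmat N θ)) := by
    rw [LinearMap.mem_ker, Matrix.toLin'_apply]
    ext i
    simp [Jmat_mulVec]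
  refine finrank_eq_one_iff'.2 ⟨⟨_, hone⟩, fun h => ?_, fun ⟨x, hx⟩ => ⟨x i₀, ?_⟩⟩
  · simpa using congrFun (congrArg Subtype.val h) i₀
  · rw [LinearMap.mem_ker, Matrix.toLin'_apply] at hx
    have h := two_mul_dotProduct_Jmat_mulVec θ x
    rw [hx, dotProduct_zero, mul_zero, eq_comm, neg_eq_zero] at h
    have hnn : ∀ i j, 0 ≤ Real.cos (θ i - θ j) * (x i - x j) ^ 2 := fun i j =>
      mul_nonneg (cos_sub_pos_of_quarter hθ i j).le (sq_nonneg _)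
    have h1 := (Finset.sum_eq_zero_iff_of_nonneg fun i _ =>
      Finset.sum_nonneg fun j _ => hnn i j).1 h i₀ (Finset.mem_univ _)
    refine Subtype.ext (funext fun j => ?_)
    have h2 := (Finset.sum_eq_zero_iff_of_nonneg fun j _ => hnn i₀ j).1 h1 j (Finset.mem_univ _)
    have h3 := (mul_eq_zero.1 h2).resolve_left (cos_sub_pos_of_quarter hθ i₀ j).ne'
    have h4 := pow_eq_zero_iff (two_ne_zero) |>.1 h3
    simp only [SetLike.mk_smul_mk, Pi.smul_apply, smul_eq_mul, mul_one]
    linarith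

lemma pi_Ioo_subset_syncSet {N : ℕ} (i₀ : Fin N) {γ : ℝ} (hγ : 0 < γ) :
    (Set.univ.pi fun _ : Fin N => Set.Ioo (-(γ * N / 2)) (γ * N / 2)) ⊆ syncSet N γ := by
  intro ω hω
  have hN : (N : ℝ) ≠ 0 := by exact_mod_cast (Fin.pos i₀).ne'
  have hω : ∀ i, -(γ * N / 2) < ω i ∧ ω i < γ * N / 2 := fun i => hω i (Set.mem_univ i)
  obtain ⟨θ, hθ, heq⟩ := exists_equilibrium i₀ hγ (Ω := fun i => ω i - (∑ j, ω j) / N)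
    (by
      rw [Finset.sum_sub_distrib, Finset.sum_const, Finset.card_univ, Fintype.card_fin,
        nsmul_eq_mul, mul_div_cancel₀ _ hN, sub_self])
    (fun i k => by linarith [hω i, hω k])
  exact ⟨θ, heq, posSemidef_neg_Jmat hθ, finrank_ker_Jmat i₀ hθ⟩

lemma gaussianReal_Ioo_toReal {a : ℝ} (ha : 0 ≤ a) :
    (gaussianReal 0 1 (Set.Ioo (-a) a)).toReal = erf (a / Real.sqrt 2) := by
  rw [gaussianReal_apply_eq_integral 0 one_ne_zero, ENNReal.toReal_ofReal
    (MeasureTheory.integral_nonneg fun x => gaussianPDFReal_nonneg 0 1 x),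
    ← integral_Ioc_eq_integral_Ioo, ← intervalIntegral.integral_of_le (by linarith)]
  have hs : (0 : ℝ) < Real.sqrt 2 := by positivity
  set g : ℝ → ℝ := fun t => Real.exp (-t ^ 2) with hg
  have hpdf : ∀ x, gaussianPDFReal 0 1 x
      = (Real.sqrt 2 * Real.sqrt π)⁻¹ * g (x / Real.sqrt 2) := by
    intro x
    simp only [gaussianPDFReal, hg, NNReal.coe_one, mul_one, sub_zero, div_pow,
      Real.sq_sqrt zero_le_two, Real.sqrt_mul zero_le_two, neg_div]
  have hinterval : ∀ u v, IntervalIntegrable g volume u v := fun u v =>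
    Continuous.intervalIntegrable (by fun_prop) u v
  have hsymm : ∫ t in (-(a / Real.sqrt 2))..0, g t = ∫ t in (0 : ℝ)..(a / Real.sqrt 2), g t := by
    have h := intervalIntegral.integral_comp_neg (a := 0) (b := a / Real.sqrt 2) g
    rw [neg_zero] at h
    rw [← h]
    simp [hg]
  simp only [hpdf]
  rw [intervalIntegral.integral_const_mul, intervalIntegral.integral_comp_div g hs.ne', neg_div,
    ← intervalIntegral.integral_add_adjacent_intervals (hinterval _ 0) (hinterval 0 _), hsymm, erf,
    smul_eq_mul]
  have hp : (0 : ℝ) < Real.sqrt π := Real.sqrt_pos.2 Real.pi_pos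
  field_simp
  ring

theorem stmt17 (N : ℕ) (hN : 2 ≤ N) (γ : ℝ) (hγ : 0 < γ) :
    erf (γ * N / (2 * Real.sqrt 2)) ^ N ≤ Psync γ N := by
  have i₀ : Fin N := ⟨0, by omega⟩
  have h := ENNReal.toReal_mono (measure_ne_top _ _)
    (measure_mono (μ := Measure.pi fun _ : Fin N => gaussianReal 0 1)
      (pi_Ioo_subset_syncSet i₀ hγ))
  rw [Measure.pi_pi, Finset.prod_const, Finset.card_univ, Fintype.card_fin, ENNReal.toReal_pow,
    gaussianReal_Ioo_toReal (by positivity), div_div] at h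
  exact h
end
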